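/- Let u_1, …, u_N be vectors in a real inner product space spanning a subspace of dimension at most N, let X be the N×N Gram matrix X_{ij} = ⟨u_i, u_j⟩ with eigenvalues λ_1 ≥ λ_2 ≥ … ≥ λ_N ≥ 0 and an orthogonal matrix Q of corresponding eigenvectors, and fix 1 ≤ M ≤ N. Define, for each i with λ_i > 0, the POD modes φ_i = λ_i^{-1/2} Σ_j Q_{ji} u_j. Then the POD modes φ_1, …, φ_M (assuming λ_M > 0) achieve reconstruction error Σ_{i=1}^{N} ‖u_i − Σ_{k=1}^{M} ⟨u_i, φ_k⟩ φ_k‖² = Σ_{k=M+1}^{N} λ_k, i.e., the error of projecting the snapshots onto the span of the first M POD modes equals the sum of the discarded eigenvalues of the Gram matrix. -/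

import Mathlib

open scoped RealInnerProductSpace BigOperators
open Matrix

/-!
Rotate the snapshots by the eigenvectors: `w k = ∑ j, Q j k • u j`. The eigenvalue equation for the
Gram matrix says `⟪u i, w k⟫ = λₖ Qᵢₖ`, so `‖w k‖² = λₖ`, and the component of `u i` along the
normalization of `w k` is `conj Qᵢₖ • w k`. As `Q` is unitary, `u i` is the sum of these components
over all `k`, so the truncation error of `u i` is exactly the sum of the discarded ones. Summing
over `i` undoes the rotation: orthonormality of the columns of `Q` leaves the discarded `‖w k‖²`.
-/

section

variable {𝕜 ι κ E : Type*} [RCLike 𝕜] [Fintype ι]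

theorem sum_smul_sum_smul_of_mul_eq_one {R V : Type*} [Semiring R] [AddCommMonoid V] [Module R V]
    [Fintype κ] [DecidableEq ι] {A : Matrix ι κ R} {B : Matrix κ ι R} (hAB : A * B = 1)
    (u : ι → V) (i : ι) : ∑ k, A i k • ∑ j, B k j • u j = u i := by
  calc ∑ k, A i k • ∑ j, B k j • u j = ∑ j, (A * B) i j • u j := by
        simp only [mul_apply, Finset.smul_sum, Finset.sum_smul, mul_smul]
        exact Finset.sum_comm
    _ = u i := by simp [hAB, one_apply]

variable [SeminormedAddCommGroup E] [InnerProductSpace 𝕜 E]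

theorem sum_norm_sq_sum_smul_of_conjTranspose_mul_self_eq_one [DecidableEq κ] {A : Matrix ι κ 𝕜}
    (hA : Aᴴ * A = 1) (w : κ → E) (s : Finset κ) :
    ∑ i, ‖∑ k ∈ s, star (A i k) • w k‖ ^ 2 = ∑ k ∈ s, ‖w k‖ ^ 2 := by
  have horth (k l : κ) : ∑ i, A i k * starRingEnd 𝕜 (A i l) = if l = k then 1 else 0 := by
    simpa [mul_apply, one_apply, mul_comm] using congr_fun₂ hA l k
  apply RCLike.ofReal_injective (K := 𝕜)
  push_cast
  simp only [← inner_self_eq_norm_sq_to_K]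
  calc ∑ i, inner 𝕜 (∑ k ∈ s, star (A i k) • w k) (∑ l ∈ s, star (A i l) • w l)
      = ∑ i, ∑ l ∈ s, ∑ k ∈ s, A i k * starRingEnd 𝕜 (A i l) * inner 𝕜 (w k) (w l) := by
        simp only [sum_inner, inner_sum, inner_smul_left, inner_smul_right, RCLike.star_def,
          RCLike.conj_conj, Finset.mul_sum, mul_assoc, mul_left_comm]
    _ = ∑ l ∈ s, ∑ k ∈ s, (∑ i, A i k * starRingEnd 𝕜 (A i l)) * inner 𝕜 (w k) (w l) := by
        simp only [Finset.sum_mul, Finset.sum_comm (s := Finset.univ)]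
    _ = ∑ k ∈ s, inner 𝕜 (w k) (w k) := by
        simp only [horth, ite_mul, one_mul, zero_mul]
        simp +contextual

theorem inner_sum_smul_eq_gram_mulVec (u : ι → E) (c : ι → 𝕜) (i : ι) :
    inner 𝕜 (u i) (∑ j, c j • u j) = (gram 𝕜 u *ᵥ c) i := by
  simp [mulVec, dotProduct, inner_sum, inner_smul_right, mul_comm]

theorem norm_sq_sum_smul_of_gram_mulVec_eq_smul {u : ι → E} {c : ι → 𝕜} {lam : ℝ}
    (hc : gram 𝕜 u *ᵥ c = (lam : 𝕜) • c) (hc1 : star c ⬝ᵥ c = 1) :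
    ‖∑ j, c j • u j‖ ^ 2 = lam := by
  apply RCLike.ofReal_injective (K := 𝕜)
  rw [RCLike.ofReal_pow, ← inner_self_eq_norm_sq_to_K, ← star_dotProduct_gram_mulVec, hc,
    dotProduct_smul, hc1, smul_eq_mul, mul_one]

/-- The POD mode `λ^(-1/2) ∑ j, c j • u j` of the snapshots `u` given by an eigenvector `c` of their
Gram matrix with eigenvalue `lam`. It is meaningful only if `0 < lam`, and is then a unit vector if
`star c ⬝ᵥ c = 1`. -/
noncomputable def podMode (u : ι → E) (lam : ℝ) (c : ι → 𝕜) : E :=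
  (((√lam)⁻¹ : ℝ) : 𝕜) • ∑ j, c j • u j

theorem inner_podMode_smul_podMode {u : ι → E} {c : ι → 𝕜} {lam : ℝ}
    (hc : gram 𝕜 u *ᵥ c = (lam : 𝕜) • c) (hlam : 0 < lam) (i : ι) :
    inner 𝕜 (podMode u lam c) (u i) • podMode u lam c = star (c i) • ∑ j, c j • u j := by
  have hinner : inner 𝕜 (∑ j, c j • u j) (u i) = lam * star (c i) := by
    rw [← inner_conj_symm, inner_sum_smul_eq_gram_mulVec, hc]
    simp
  have hsqrt : (√lam)⁻¹ * lam * (√lam)⁻¹ = 1 := by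
    have := Real.sqrt_pos.2 hlam
    field_simp
    exact (Real.sq_sqrt hlam.le).symm
  rw [podMode, inner_smul_left, RCLike.conj_ofReal, hinner, smul_smul]
  congr 1
  calc (((√lam)⁻¹ : ℝ) : 𝕜) * (lam * star (c i)) * ((√lam)⁻¹ : ℝ)
      = (((√lam)⁻¹ * lam * (√lam)⁻¹ : ℝ) : 𝕜) * star (c i) := by push_cast; ring
    _ = star (c i) := by rw [hsqrt, RCLike.ofReal_one, one_mul]

theorem sub_sum_inner_podMode_smul_podMode [DecidableEq ι] [Fintype κ] [DecidableEq κ]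
    {u : ι → E} {lam : κ → ℝ} {Q : Matrix ι κ 𝕜} (hQ : Q * Qᴴ = 1) {s : Finset κ}
    (heig : ∀ k ∈ s, gram 𝕜 u *ᵥ Q.col k = (lam k : 𝕜) • Q.col k)
    (hs : ∀ k ∈ s, 0 < lam k) (i : ι) :
    u i - ∑ k ∈ s, inner 𝕜 (podMode u (lam k) (Q.col k)) (u i) • podMode u (lam k) (Q.col k)
      = ∑ k ∈ sᶜ, star (Q i k) • ∑ j, Q j k • u j := by
  have hexpand : ∑ k, star (Q i k) • ∑ j, Q j k • u j = u i :=
    sum_smul_sum_smul_of_mul_eq_one (A := Qᴴᵀ) (B := Qᵀ)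
      (by rw [← transpose_mul, hQ, transpose_one]) u i
  have hkept : ∑ k ∈ s, inner 𝕜 (podMode u (lam k) (Q.col k)) (u i) • podMode u (lam k) (Q.col k)
      = ∑ k ∈ s, star (Q i k) • ∑ j, Q j k • u j :=
    Finset.sum_congr rfl fun k hk ↦ inner_podMode_smul_podMode (heig k hk) (hs k hk) i
  rw [hkept, sub_eq_iff_eq_add', Finset.sum_add_sum_compl, hexpand]

theorem pod_truncation_error_eq_sum_discarded_eigenvalues_general [DecidableEq ι] {u : ι → E}
    {lam : ι → ℝ} {Q : Matrix ι ι 𝕜} (hQ : Q ∈ unitaryGroup ι 𝕜)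
    (heig : ∀ k, gram 𝕜 u *ᵥ Q.col k = (lam k : 𝕜) • Q.col k)
    {s : Finset ι} (hs : ∀ k ∈ s, 0 < lam k) :
    ∑ i, ‖u i - ∑ k ∈ s,
        inner 𝕜 (podMode u (lam k) (Q.col k)) (u i) • podMode u (lam k) (Q.col k)‖ ^ 2
      = ∑ k ∈ sᶜ, lam k := by
  have hcol : Qᴴ * Q = 1 := mem_unitaryGroup_iff'.1 hQ
  have hrow : Q * Qᴴ = 1 := mem_unitaryGroup_iff.1 hQ
  simp only [sub_sum_inner_podMode_smul_podMode hrow (fun k _ ↦ heig k) hs]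
  rw [sum_norm_sq_sum_smul_of_conjTranspose_mul_self_eq_one hcol]
  exact Finset.sum_congr rfl fun k _ ↦ norm_sq_sum_smul_of_gram_mulVec_eq_smul (heig k) <|
    (congr_fun₂ hcol k k).trans (one_apply_eq k)

end

/-- The rank-`M` POD truncation built from the decreasingly ordered eigenpairs of the
Gram matrix of the snapshots achieves reconstruction error equal to the sum of the
discarded eigenvalues: `Σᵢ ‖uᵢ − Σ_{k<M} ⟪uᵢ, φₖ⟫ φₖ‖² = Σ_{k≥M} λₖ`. -/
theorem pod_truncation_error_eq_sum_discarded_eigenvalues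
    {E : Type*} [NormedAddCommGroup E] [InnerProductSpace ℝ E]
    (N M : ℕ) (hM1 : 1 ≤ M) (hMN : M ≤ N)
    (u : Fin N → E)
    (X : Matrix (Fin N) (Fin N) ℝ)
    (hX : ∀ i j, X i j = ⟪u i, u j⟫)
    (lam : Fin N → ℝ)
    (hnonneg : ∀ i, 0 ≤ lam i)
    (hsorted : ∀ i j : Fin N, i ≤ j → lam j ≤ lam i)
    (Q : Matrix (Fin N) (Fin N) ℝ)
    (hQ : Qᵀ * Q = 1)
    (heig : ∀ i, X.mulVec (fun j => Q j i) = fun j => lam i * Q j i)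
    (φ : Fin N → E)
    (hφ : ∀ i, 0 < lam i → φ i = (Real.sqrt (lam i))⁻¹ • ∑ j, Q j i • u j)
    (hlamM : 0 < lam ⟨M - 1, by omega⟩) :
    ∑ i, ‖u i - ∑ k ∈ Finset.univ.filter (fun k : Fin N => (k : ℕ) < M),
        ⟪u i, φ k⟫ • φ k‖ ^ 2
      = ∑ k ∈ Finset.univ.filter (fun k : Fin N => M ≤ (k : ℕ)), lam k := by
  obtain rfl : X = gram ℝ u := ext hX
  have hpos : ∀ k ∈ Finset.univ.filter (fun k : Fin N => (k : ℕ) < M), 0 < lam k := fun k hk ↦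
    hlamM.trans_le <| hsorted k ⟨M - 1, by omega⟩ <| Nat.le_sub_one_of_lt (by simpa using hk)
  have htruncation (i : Fin N) :
      ∑ k ∈ Finset.univ.filter (fun k : Fin N => (k : ℕ) < M), ⟪u i, φ k⟫ • φ k
        = ∑ k ∈ Finset.univ.filter (fun k : Fin N => (k : ℕ) < M),
          ⟪podMode u (lam k) (Q.col k), u i⟫ • podMode u (lam k) (Q.col k) :=
    Finset.sum_congr rfl fun k hk ↦ by
      rw [show φ k = podMode u (lam k) (Q.col k) from hφ k (hpos k hk), real_inner_comm]
  simpa only [htruncation, Finset.compl_filter, not_lt] using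
    pod_truncation_error_eq_sum_discarded_eigenvalues_general (𝕜 := ℝ)
      ((mem_orthogonalGroup_iff' _ _).2 hQ) heig hpos
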